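/- Let (G, G⁺, Δ) be a support-preserving LCM-Garside structure. Then every x ∈ G admits a parabolic closure: there is a parabolic subgroup PC(x) of G with x ∈ PC(x) such that PC(x) ⊆ H for every parabolic subgroup H containing x. Moreover, if x is recurrent, then PC(x) = G_{Supp(x)}. -/

import Mathlib

open scoped Pointwise Classical

/-- A Garside structure on a group `G`: a submonoid `pos` of positive elements with
trivial units, prefix and suffix lattice operations, and a Garside element `delta`. -/
structure GarsideStructure (G : Type*) [Group G] where
  /-- the submonoid of positive elements -/
  pos : Submonoid G
  /-- the Garside element Δ -/
  delta : G
  /-- meet for the prefix order -/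
  meet : G → G → G
  /-- join for the prefix order -/
  join : G → G → G
  /-- meet for the suffix order -/
  rmeet : G → G → G
  /-- join for the suffix order -/
  rjoin : G → G → G
  units_triv : ∀ a : G, a ∈ pos → a⁻¹ ∈ pos → a = 1
  meet_le_left : ∀ a b : G, (meet a b)⁻¹ * a ∈ pos
  meet_le_right : ∀ a b : G, (meet a b)⁻¹ * b ∈ pos
  le_meet : ∀ a b c : G, c⁻¹ * a ∈ pos → c⁻¹ * b ∈ pos → c⁻¹ * meet a b ∈ pos
  le_join_left : ∀ a b : G, a⁻¹ * join a b ∈ pos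
  le_join_right : ∀ a b : G, b⁻¹ * join a b ∈ pos
  join_le : ∀ a b c : G, a⁻¹ * c ∈ pos → b⁻¹ * c ∈ pos → (join a b)⁻¹ * c ∈ pos
  rmeet_le_left : ∀ a b : G, a * (rmeet a b)⁻¹ ∈ pos
  rmeet_le_right : ∀ a b : G, b * (rmeet a b)⁻¹ ∈ pos
  le_rmeet : ∀ a b c : G, a * c⁻¹ ∈ pos → b * c⁻¹ ∈ pos → rmeet a b * c⁻¹ ∈ pos
  rjoin_le_left : ∀ a b : G, rjoin a b * a⁻¹ ∈ pos
  rjoin_le_right : ∀ a b : G, rjoin a b * b⁻¹ ∈ pos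
  rjoin_le : ∀ a b c : G, c * a⁻¹ ∈ pos → c * b⁻¹ ∈ pos → c * (rjoin a b)⁻¹ ∈ pos
  delta_pos : delta ∈ pos
  /-- Δ is balanced: its positive prefixes coincide with its positive suffixes -/
  delta_balanced : ∀ s : G, s ∈ pos → (s⁻¹ * delta ∈ pos ↔ delta * s⁻¹ ∈ pos)
  /-- the set of simple elements (divisors of Δ) is finite -/
  divDelta_finite : {s : G | s ∈ pos ∧ s⁻¹ * delta ∈ pos}.Finite
  /-- the simple elements generate `G` -/
  divDelta_generates : Subgroup.closure {s : G | s ∈ pos ∧ s⁻¹ * delta ∈ pos} = ⊤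
  /-- the atoms generate the positive monoid -/
  atoms_generate :
    Submonoid.closure {a : G | a ∈ pos ∧ a ≠ 1 ∧
      ∀ b ∈ pos, b⁻¹ * a ∈ pos → b = 1 ∨ b = a} = pos
  /-- every atom divides Δ -/
  atoms_divide_delta : ∀ a : G, a ∈ pos → a ≠ 1 →
    (∀ b ∈ pos, b⁻¹ * a ∈ pos → b = 1 ∨ b = a) → a⁻¹ * delta ∈ pos
  /-- every element is bounded below and above by powers of Δ -/
  delta_bounds : ∀ x : G, ∃ p q : ℤ, p ≤ q ∧ (delta ^ p)⁻¹ * x ∈ pos ∧ x⁻¹ * delta ^ q ∈ pos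
  /-- conjugation by Δ maps the positive monoid bijectively onto itself -/
  conj_delta : ∀ a : G, a ∈ pos ↔ delta * a * delta⁻¹ ∈ pos
  /-- some positive power of Δ is central -/
  central_power : ∃ n : ℕ, 0 < n ∧ delta ^ n ∈ Subgroup.center G
  /-- no infinite strictly decreasing (for the prefix order) sequence of positive elements -/
  no_infinite_descent : ¬ ∃ f : ℕ → G, (∀ n, f n ∈ pos) ∧
    ∀ n, (f (n + 1))⁻¹ * f n ∈ pos ∧ f (n + 1) ≠ f n

namespace GarsideStructure

variable {G : Type*} [Group G] (S : GarsideStructure G)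

/-- the prefix order: `a ≼ b` iff `a⁻¹ * b` is positive -/
def le (a b : G) : Prop := a⁻¹ * b ∈ S.pos

/-- the set of positive prefixes of an element -/
def Div (d : G) : Set G := {s : G | s ∈ S.pos ∧ S.le s d}

/-- atoms: nontrivial positive elements with no nontrivial proper positive prefix -/
def IsAtomic (a : G) : Prop :=
  a ∈ S.pos ∧ a ≠ 1 ∧ ∀ b ∈ S.pos, S.le b a → b = 1 ∨ b = a

/-- the set of atoms -/
def atoms : Set G := {a : G | S.IsAtomic a}

/-- the left denominator of `x`: `D_L x = (1 ∧ x)⁻¹` -/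
def DL (x : G) : G := (S.meet 1 x)⁻¹

/-- the left numerator of `x`: `N_L x = D_L x * x` -/
def NL (x : G) : G := S.DL x * x

/-- the (left) swap `φ(x) = N_L x * (D_L x)⁻¹ = D_L x * x * (D_L x)⁻¹` -/
def swap (x : G) : G := S.DL x * x * (S.DL x)⁻¹

/-- an element is recurrent if it is fixed by some positive iterate of the swap map -/
def Recurrent (x : G) : Prop := ∃ m : ℕ, 0 < m ∧ S.swap^[m] x = x

/-- the set `R(x)` of recurrent conjugates of `x` -/
def Rset (x : G) : Set G := {y : G | IsConj x y ∧ S.Recurrent y}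

/-- the set `C⁺(x)` of positive conjugates of `x` -/
def Cpos (x : G) : Set G := {y : G | IsConj x y ∧ y ∈ S.pos}

/-- the set `C⁻(x)` of negative conjugates of `x` -/
def Cneg (x : G) : Set G := {y : G | IsConj x y ∧ y⁻¹ ∈ S.pos}

/-- the transport of `u` at `y`: with `y = a⁻¹ b` reduced, `u^{(1)} = (a u) ∧ (b u)` -/
def transport (y u : G) : G := S.meet (S.DL y * u) (S.NL y * u)

/-- `Δ_X`: the least upper bound for the prefix order of a set `X` (`1` if there is none) -/
noncomputable def deltaOf (X : Set G) : G :=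
  if h : ∃ d : G, (∀ x ∈ X, S.le x d) ∧ ∀ c : G, (∀ x ∈ X, S.le x c) → S.le d c
  then h.choose else 1

/-- the closure `X̄ = Div(Δ_X) ∩ 𝒜` of a set of atoms -/
noncomputable def closureOf (X : Set G) : Set G := S.Div (S.deltaOf X) ∩ S.atoms

/-- the subgroup `G_X` generated by the closure of `X` -/
noncomputable def GX (X : Set G) : Subgroup G := Subgroup.closure (S.closureOf X)

/-- the support of an element: the closure of the set of atoms appearing in atom
factorizations of its left denominator and left numerator -/
noncomputable def supp (x : G) : Set G :=
  if h : ∃ p : List G × List G,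
      (∀ a ∈ p.1, a ∈ S.atoms) ∧ (∀ a ∈ p.2, a ∈ S.atoms) ∧
      p.1.prod = S.DL x ∧ p.2.prod = S.NL x
  then S.closureOf ({a : G | a ∈ h.choose.1} ∪ {a : G | a ∈ h.choose.2})
  else ∅

/-- an LCM-Garside structure -/
structure IsLCM : Prop where
  delta_eq : S.delta = S.deltaOf S.atoms
  balanced : ∀ X ⊆ S.atoms, ∀ s ∈ S.pos,
    (S.le s (S.deltaOf X) ↔ S.deltaOf X * s⁻¹ ∈ S.pos)
  div_eq : ∀ X ⊆ S.atoms,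
    S.Div (S.deltaOf X) = S.Div S.delta ∩ {g : G | g ∈ S.GX X ∧ g ∈ S.pos}
  factor_closed : ∀ X ⊆ S.atoms, ∀ g : G, g ∈ S.GX X → g ∈ S.pos →
    ∀ a b : G, a ∈ S.pos → b ∈ S.pos → g = a * b → a ∈ S.GX X ∧ b ∈ S.GX X
  lattice_closed : ∀ X ⊆ S.atoms, ∀ a b : G, a ∈ S.GX X → b ∈ S.GX X →
    S.meet a b ∈ S.GX X ∧ S.join a b ∈ S.GX X
  fraction_closed : ∀ X ⊆ S.atoms, ∀ g : G, g ∈ S.GX X →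
    S.DL g ∈ S.GX X ∧ S.NL g ∈ S.GX X

/-- a standard parabolic subgroup: the subgroup generated by a saturated set of atoms -/
noncomputable def IsStandardParabolic (H : Subgroup G) : Prop :=
  ∃ X : Set G, X ⊆ S.atoms ∧ S.closureOf X = X ∧ H = S.GX X

/-- a parabolic subgroup: a conjugate of a standard parabolic subgroup -/
noncomputable def IsParabolic (H : Subgroup G) : Prop :=
  ∃ (P : Subgroup G) (c : G), S.IsStandardParabolic P ∧
    H = Subgroup.map (MulAut.conj c).toMonoidHom P

/-- the structure is support-preserving if conjugations between positive elements
conjugate the corresponding parabolic subgroups of the supports -/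
noncomputable def SupportPreserving : Prop :=
  ∀ y ∈ S.pos, ∀ z ∈ S.pos, ∀ α : G, α⁻¹ * y * α = z →
    Subgroup.map (MulAut.conj α⁻¹).toMonoidHom (S.GX (S.supp y)) = S.GX (S.supp z)

/-- `P` is the parabolic closure of `x` -/
noncomputable def IsParabolicClosure (x : G) (P : Subgroup G) : Prop :=
  S.IsParabolic P ∧ x ∈ P ∧ ∀ H : Subgroup G, S.IsParabolic H → x ∈ H → P ≤ H

end GarsideStructure

/-!
Every `x` becomes recurrent after finitely many swaps, and a swap is a conjugation, so it suffices
to show that `G_{Supp(x)}` is the parabolic closure of a recurrent `x`.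

A standard parabolic subgroup contains the numerators and denominators of its elements, so
`G_{Supp(x)}` is the least standard parabolic subgroup containing `x`. If `x` lies in a conjugate
`e P e⁻¹` of a standard parabolic `P`, then `e⁻¹ x e ∈ P` can be swapped inside `P` to a recurrent
element `z`. What remains is that an element `α` with `α x α⁻¹ = z` conjugates `G_{Supp(x)}` to
`G_{Supp(z)}`.

Transport along the swaps fixes the powers of `Δ` and is monotone, so it keeps `α` inside an
interval `[Δ^p, Δ^q]`, which is finite; hence the `n`-fold transport of `α` is `α` itself for some
`n > 0` that is a period of both `x` and `z`. This says that `α` conjugates the product of the `n`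
successive denominators of `x` to that of `z`, and therefore also the products of the numerators.
So `α` conjugates positive elements whose supports generate `G_{Supp(x)}` and `G_{Supp(z)}`, and
support preservation applies.
-/

theorem exists_semiconjBy_pow_of_finite_range {G : Type*} [Group G] {a b c : G}
    (h : (Set.range fun k : ℕ => b ^ k * c * (a ^ k)⁻¹).Finite) :
    ∃ k, 0 < k ∧ SemiconjBy c (a ^ k) (b ^ k) := by
  obtain ⟨i, j, hij, heq⟩ := h.exists_lt_map_eq_of_forall_mem Set.mem_range_self
  obtain ⟨k, hk, rfl⟩ := exists_pos_add_of_lt' hij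
  have hc : c * (a ^ i)⁻¹ = b ^ k * c * (a ^ k)⁻¹ * (a ^ i)⁻¹ := by
    simpa [pow_add, mul_assoc] using heq
  exact ⟨k, hk, eq_mul_inv_iff_mul_eq.1 (mul_right_cancel hc)⟩

namespace GarsideStructure

variable {G : Type*} [Group G] {S : GarsideStructure G} {a b c d x y α : G} {X Y : Set G}
  {P Q : Subgroup G} {p q : ℤ} {n : ℕ}

section PrefixOrder

theorem one_le_iff : S.le 1 a ↔ a ∈ S.pos := by simp [le]

theorem le_mul_right_iff : S.le a (a * b) ↔ b ∈ S.pos := by simp [le]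

protected theorem le.refl (a : G) : S.le a a := by simp [le, S.pos.one_mem]

protected theorem le.trans (hab : S.le a b) (hbc : S.le b c) : S.le a c := by
  simpa [le, mul_assoc] using S.pos.mul_mem hab hbc

protected theorem le.antisymm (hab : S.le a b) (hba : S.le b a) : a = b :=
  inv_mul_eq_one.1 (S.units_triv (a⁻¹ * b) hab (by simpa [le] using hba))

theorem eq_of_forall_le_iff (h : ∀ c, S.le c a ↔ S.le c b) : a = b :=
  ((h a).1 (le.refl a)).antisymm ((h b).2 (le.refl b))

theorem mul_le_mul_iff_left (c : G) : S.le (c * a) (c * b) ↔ S.le a b := by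
  simp [le, mul_assoc]

theorem le_meet_iff : S.le c (S.meet a b) ↔ S.le c a ∧ S.le c b :=
  ⟨fun h => ⟨h.trans (S.meet_le_left a b), h.trans (S.meet_le_right a b)⟩,
    fun h => S.le_meet a b c h.1 h.2⟩

theorem join_le_iff : S.le (S.join a b) c ↔ S.le a c ∧ S.le b c :=
  ⟨fun h => ⟨le.trans (S.le_join_left a b) h, le.trans (S.le_join_right a b) h⟩,
    fun h => S.join_le a b c h.1 h.2⟩

theorem meet_mono (hac : S.le a c) (hbd : S.le b d) : S.le (S.meet a b) (S.meet c d) :=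
  le_meet_iff.2 ⟨le.trans (S.meet_le_left a b) hac, le.trans (S.meet_le_right a b) hbd⟩

variable (S) in
theorem mul_meet (c a b : G) : c * S.meet a b = S.meet (c * a) (c * b) := by
  refine eq_of_forall_le_iff (S := S) fun d => ?_
  rw [← mul_inv_cancel_left c d]
  simp only [mul_le_mul_iff_left, le_meet_iff]

variable (S) in
theorem exists_forall_le_iff (hX : X.Finite) (hne : X.Nonempty) :
    ∃ d, ∀ c, S.le d c ↔ ∀ x ∈ X, S.le x c := by
  induction X, hX using Set.Finite.induction_on with
  | empty => exact (Set.not_nonempty_empty hne).elim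
  | @insert a X _ _ ih =>
    rcases X.eq_empty_or_nonempty with rfl | hX
    · exact ⟨a, by simp⟩
    · obtain ⟨d, hd⟩ := ih hX
      exact ⟨S.join a d, fun c => by rw [join_le_iff, hd, Set.forall_mem_insert]⟩

end PrefixOrder

section GarsideElement

theorem conj_delta_zpow_mem_pos_iff (k : ℤ) :
    S.delta ^ k * a * (S.delta ^ k)⁻¹ ∈ S.pos ↔ a ∈ S.pos := by
  have hdelta : MulAut.conj S.delta • S.pos = S.pos := by
    ext b
    rw [Submonoid.mem_pointwise_smul_iff_inv_smul_mem, S.conj_delta]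
    simp [mul_assoc]
  have hzpow : MulAut.conj (S.delta ^ k) • S.pos = S.pos := by
    rw [map_zpow]
    exact zpow_mem (MulAction.mem_stabilizer_iff.2 hdelta) k
  have h := Submonoid.smul_mem_pointwise_smul_iff (a := MulAut.conj (S.delta ^ k)) (S := S.pos)
    (x := a)
  rwa [hzpow] at h

theorem mul_delta_zpow_le_mul_delta_zpow_iff (k : ℤ) :
    S.le (a * S.delta ^ k) (b * S.delta ^ k) ↔ S.le a b := by
  rw [le, le, ← conj_delta_zpow_mem_pos_iff k]
  simp [mul_assoc]

theorem meet_mul_delta_zpow (a b : G) (k : ℤ) :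
    S.meet a b * S.delta ^ k = S.meet (a * S.delta ^ k) (b * S.delta ^ k) := by
  refine eq_of_forall_le_iff (S := S) fun c => ?_
  rw [← inv_mul_cancel_right c (S.delta ^ k)]
  simp only [← zpow_neg, mul_delta_zpow_le_mul_delta_zpow_iff, le_meet_iff]

variable (S) in
/-- The interval `[Δ^p, Δ^q]` of the prefix order. -/
def deltaInterval (p q : ℤ) : Set G := {g | S.le (S.delta ^ p) g ∧ S.le g (S.delta ^ q)}

theorem finite_deltaInterval (hpq : p ≤ q) : (S.deltaInterval p q).Finite := by
  induction q, hpq using Int.leInduction with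
  | base =>
    refine (Set.finite_singleton (S.delta ^ p)).subset ?_
    rintro g ⟨h₁, h₂⟩
    exact h₂.antisymm h₁
  | succ q hpq ih =>
    have hpos : S.delta ^ (q - p) ∈ S.pos := by
      lift q - p to ℕ using by omega with m
      simpa using S.pos.pow_mem S.delta_pos m
    have hle : S.le (S.delta ^ p) (S.delta ^ q) := by
      rw [← add_sub_cancel p q, zpow_add]
      exact le_mul_right_iff.2 hpos
    -- `g = (g ∧ Δ^q) * s`, where `s` is simple because `g ≼ gΔ ∧ Δ^(q+1) = (g ∧ Δ^q)Δ`.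
    refine (ih.image2 (· * ·) S.divDelta_finite).subset ?_
    rintro g ⟨h₁, h₂⟩
    refine ⟨S.meet g (S.delta ^ q), ⟨le_meet_iff.2 ⟨h₁, hle⟩, S.meet_le_right _ _⟩,
      (S.meet g (S.delta ^ q))⁻¹ * g, ⟨S.meet_le_left _ _, ?_⟩, mul_inv_cancel_left _ _⟩
    have hg : S.le g (S.meet g (S.delta ^ q) * S.delta ^ (1 : ℤ)) := by
      rw [meet_mul_delta_zpow, ← zpow_add]
      exact le_meet_iff.2 ⟨le_mul_right_iff.2 (by simpa using S.delta_pos), h₂⟩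
    simpa [le, mul_assoc] using hg

end GarsideElement

section Swap

variable (S)

theorem DL_mem_pos (x : G) : S.DL x ∈ S.pos := by simpa [DL] using S.meet_le_left 1 x

theorem NL_mem_pos (x : G) : S.NL x ∈ S.pos := S.meet_le_right 1 x

theorem DL_inv_mul_NL (x : G) : (S.DL x)⁻¹ * S.NL x = x := inv_mul_cancel_left _ _

theorem meet_DL_NL (x : G) : S.meet (S.DL x) (S.NL x) = 1 := by
  have h := S.mul_meet (S.DL x) 1 x
  rw [mul_one] at h
  rw [NL, ← h, DL, inv_mul_cancel]

variable {S} in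
theorem transport_mono (y : G) (h : S.le a b) : S.le (S.transport y a) (S.transport y b) :=
  meet_mono ((mul_le_mul_iff_left _).2 h) ((mul_le_mul_iff_left _).2 h)

theorem transport_delta_zpow (y : G) (k : ℤ) : S.transport y (S.delta ^ k) = S.delta ^ k := by
  rw [transport, ← meet_mul_delta_zpow, S.meet_DL_NL, one_mul]

variable {S} in
theorem transport_mem_deltaInterval (y : G) (hα : α ∈ S.deltaInterval p q) :
    S.transport y α ∈ S.deltaInterval p q :=
  ⟨S.transport_delta_zpow y p ▸ transport_mono y hα.1,
    S.transport_delta_zpow y q ▸ transport_mono y hα.2⟩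

theorem transport_eq_of_semiconjBy (hα : SemiconjBy α x y) :
    S.transport y α = S.DL y * α * (S.DL x)⁻¹ := by
  have h := S.mul_meet (S.DL y * α) 1 x
  rw [mul_one, mul_assoc _ α x, hα.eq, ← mul_assoc] at h
  rw [transport, NL, ← h, DL, DL, inv_inv]

theorem semiconjBy_DL_swap (x : G) : SemiconjBy (S.DL x) x (S.swap x) :=
  SemiconjBy.conj_mk _ _

theorem semiconjBy_transport (hα : SemiconjBy α x y) :
    SemiconjBy (S.transport y α) (S.swap x) (S.swap y) := by
  rw [S.transport_eq_of_semiconjBy hα]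
  exact ((S.semiconjBy_DL_swap y).mul_left hα).mul_left
    (SemiconjBy.inv_symm_left_iff.2 (S.semiconjBy_DL_swap x))

/-- The product `a_{n-1} ⋯ a_0`, where `a_i` is the left denominator of the `i`-th iterated swap of
`x`; it conjugates `x` to its `n`-th iterated swap. -/
def swapDen : ℕ → G → G
  | 0, _ => 1
  | n + 1, x => swapDen n (S.swap x) * S.DL x

/-- The product `b_{n-1} ⋯ b_0`, where `b_i` is the left numerator of the `i`-th iterated swap of
`x` (see `swapNum_succ`); the closed form used as definition generalizes `S.NL x = S.DL x * x`. -/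
def swapNum (n : ℕ) (x : G) : G := S.swapDen n x * x ^ n

theorem swapNum_succ (n : ℕ) (x : G) :
    S.swapNum (n + 1) x = S.swapNum n (S.swap x) * S.NL x := by
  have h : S.DL x * x ^ n = S.swap x ^ n * S.DL x := (S.semiconjBy_DL_swap x).pow_right n
  simp only [swapNum, swapDen, NL, pow_succ, mul_assoc]
  rw [← mul_assoc (S.DL x), h, mul_assoc]

theorem swapDen_mem_pos (n : ℕ) (x : G) : S.swapDen n x ∈ S.pos := by
  induction n generalizing x with
  | zero => exact S.pos.one_mem
  | succ n ih => exact S.pos.mul_mem (ih _) (S.DL_mem_pos x)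

theorem swapNum_mem_pos (n : ℕ) (x : G) : S.swapNum n x ∈ S.pos := by
  induction n generalizing x with
  | zero => simp [swapNum, swapDen, S.pos.one_mem]
  | succ n ih => exact S.swapNum_succ n x ▸ S.pos.mul_mem (ih _) (S.NL_mem_pos x)

theorem semiconjBy_swapDen (n : ℕ) (x : G) : SemiconjBy (S.swapDen n x) x (S.swap^[n] x) := by
  induction n generalizing x with
  | zero => exact SemiconjBy.one_left x
  | succ n ih => exact (ih (S.swap x)).mul_left (S.semiconjBy_DL_swap x)

theorem swap_iterate_eq (n : ℕ) (x : G) :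
    S.swap^[n] x = S.swapDen n x * x * (S.swapDen n x)⁻¹ :=
  eq_mul_inv_of_mul_eq (S.semiconjBy_swapDen n x).eq.symm

theorem swapDen_add (m n : ℕ) (x : G) :
    S.swapDen (m + n) x = S.swapDen m (S.swap^[n] x) * S.swapDen n x := by
  induction n generalizing x with
  | zero => simp [swapDen]
  | succ n ih => rw [← add_assoc, swapDen, ih, swapDen, Function.iterate_succ_apply, mul_assoc]

variable {S} in
theorem swapDen_mul_of_isPeriodicPt (hx : Function.IsPeriodicPt S.swap n x) (k : ℕ) :
    S.swapDen (k * n) x = S.swapDen n x ^ k := by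
  induction k with
  | zero => simp [swapDen]
  | succ k ih => rw [Nat.succ_mul, S.swapDen_add, hx.eq, ih, pow_succ]

variable {S} in
theorem iterate_transport_mem_deltaInterval (hα : SemiconjBy α x y)
    (hmem : α ∈ S.deltaInterval p q) (n : ℕ) :
    S.swapDen n y * α * (S.swapDen n x)⁻¹ ∈ S.deltaInterval p q := by
  induction n generalizing x y α with
  | zero => simpa [swapDen] using hmem
  | succ n ih =>
    have h := ih (S.semiconjBy_transport hα) (transport_mem_deltaInterval y hmem)
    simpa [S.transport_eq_of_semiconjBy hα, swapDen, mul_assoc] using h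

theorem finite_range_iterate_transport (hα : SemiconjBy α x y) :
    (Set.range fun n => S.swapDen n y * α * (S.swapDen n x)⁻¹).Finite := by
  obtain ⟨p, q, hpq, h₁, h₂⟩ := S.delta_bounds α
  exact (finite_deltaInterval hpq).subset
    (Set.range_subset_iff.2 (iterate_transport_mem_deltaInterval hα ⟨h₁, h₂⟩))

end Swap

section Recurrent

variable (S) in
theorem exists_recurrent_iterate_swap (x : G) : ∃ n, S.Recurrent (S.swap^[n] x) := by
  -- The iterated swaps of `x` are the iterated transports of `x` viewed as a conjugator of itself.
  have hfin : (Set.range fun n => S.swap^[n] x).Finite := by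
    simpa only [S.swap_iterate_eq] using
      S.finite_range_iterate_transport (Commute.refl x).semiconjBy
  obtain ⟨i, j, hij, h⟩ := hfin.exists_lt_map_eq_of_forall_mem Set.mem_range_self
  refine ⟨i, j - i, Nat.sub_pos_of_lt hij, ?_⟩
  rw [← Function.iterate_add_apply, Nat.sub_add_cancel hij.le, h]

theorem Recurrent.exists_semiconjBy_swapDen (hx : S.Recurrent x) (hy : S.Recurrent y)
    (hα : SemiconjBy α x y) :
    ∃ n, n ≠ 0 ∧ SemiconjBy α (S.swapDen n x) (S.swapDen n y) := by
  obtain ⟨l, hl, hlx⟩ := hx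
  obtain ⟨m, hm, hmy⟩ := hy
  have hper_x : Function.IsPeriodicPt S.swap (l * m) x := Function.IsPeriodicPt.mul_const hlx m
  have hper_y : Function.IsPeriodicPt S.swap (l * m) y := Function.IsPeriodicPt.const_mul hmy l
  have hfin : (Set.range fun k : ℕ =>
      S.swapDen (l * m) y ^ k * α * (S.swapDen (l * m) x ^ k)⁻¹).Finite := by
    refine (S.finite_range_iterate_transport hα).subset (Set.range_subset_iff.2 fun k => ?_)
    exact ⟨k * (l * m), by simp only [swapDen_mul_of_isPeriodicPt, hper_x, hper_y]⟩
  obtain ⟨k, hk, hsemi⟩ := exists_semiconjBy_pow_of_finite_range hfin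
  refine ⟨k * (l * m), by positivity, ?_⟩
  rwa [swapDen_mul_of_isPeriodicPt hper_x, swapDen_mul_of_isPeriodicPt hper_y]

end Recurrent

section Closure

variable (S) in
theorem finite_atoms : S.atoms.Finite :=
  S.divDelta_finite.subset fun a ha => ⟨ha.1, S.atoms_divide_delta a ha.1 ha.2.1 ha.2.2⟩

theorem deltaOf_empty : S.deltaOf ∅ = 1 := by
  unfold deltaOf
  split_ifs with h
  · have hmin : ∀ c, S.le h.choose c := fun c => h.choose_spec.2 c (by simp)
    exact (hmin 1).antisymm (one_le_iff.2 (le_mul_right_iff.1 (hmin (h.choose * h.choose))))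
  · rfl

theorem deltaOf_le_iff_of_nonempty (hX : X.Finite) (hne : X.Nonempty) :
    S.le (S.deltaOf X) c ↔ ∀ x ∈ X, S.le x c := by
  obtain ⟨d, hd⟩ := S.exists_forall_le_iff hX hne
  have h : ∃ d, (∀ x ∈ X, S.le x d) ∧ ∀ c, (∀ x ∈ X, S.le x c) → S.le d c :=
    ⟨d, (hd d).1 (le.refl d), fun c => (hd c).2⟩
  rw [deltaOf, dif_pos h]
  exact ⟨fun hc x hx => (h.choose_spec.1 x hx).trans hc, h.choose_spec.2 c⟩

/-- The clause `c ∈ S.pos` only matters for `X = ∅`: then `Δ_X = 1`, although every `c` is an upper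
bound of `X`. -/
theorem deltaOf_le_iff (hX : X ⊆ S.atoms) :
    S.le (S.deltaOf X) c ↔ c ∈ S.pos ∧ ∀ x ∈ X, S.le x c := by
  rcases X.eq_empty_or_nonempty with rfl | ⟨a, ha⟩
  · simp [deltaOf_empty, one_le_iff]
  · rw [deltaOf_le_iff_of_nonempty (S.finite_atoms.subset hX) ⟨a, ha⟩]
    exact (and_iff_right_of_imp fun h =>
      one_le_iff.1 ((one_le_iff.2 (hX ha).1).trans (h a ha))).symm

theorem closureOf_subset_atoms (X : Set G) : S.closureOf X ⊆ S.atoms := Set.inter_subset_right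

theorem subset_closureOf (hX : X ⊆ S.atoms) : X ⊆ S.closureOf X := fun x hx =>
  ⟨⟨(hX hx).1, ((deltaOf_le_iff hX).1 (le.refl _)).2 x hx⟩, hX hx⟩

theorem closureOf_subset_closureOf (hX : X ⊆ S.atoms) (hY : Y ⊆ S.atoms)
    (h : X ⊆ S.closureOf Y) : S.closureOf X ⊆ S.closureOf Y := by
  rintro a ⟨⟨hpos, hle⟩, ha⟩
  have hdelta : S.le (S.deltaOf X) (S.deltaOf Y) :=
    (deltaOf_le_iff hX).2 ⟨((deltaOf_le_iff hY).1 (le.refl _)).1, fun x hx => (h hx).1.2⟩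
  exact ⟨⟨hpos, hle.trans hdelta⟩, ha⟩

theorem closureOf_closureOf (hX : X ⊆ S.atoms) :
    S.closureOf (S.closureOf X) = S.closureOf X :=
  (closureOf_subset_closureOf (closureOf_subset_atoms X) hX subset_rfl).antisymm
    (subset_closureOf (closureOf_subset_atoms X))

theorem subset_GX (hX : X ⊆ S.atoms) : X ⊆ S.GX X :=
  (subset_closureOf hX).trans Subgroup.subset_closure

theorem GX_closureOf (hX : X ⊆ S.atoms) : S.GX (S.closureOf X) = S.GX X := by
  rw [GX, closureOf_closureOf hX, GX]

theorem isStandardParabolic_GX (hX : X ⊆ S.atoms) : S.IsStandardParabolic (S.GX X) :=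
  ⟨S.closureOf X, closureOf_subset_atoms X, closureOf_closureOf hX, (GX_closureOf hX).symm⟩

end Closure

section Support

theorem exists_list_atoms_prod_eq (ha : a ∈ S.pos) :
    ∃ l : List G, (∀ b ∈ l, b ∈ S.atoms) ∧ l.prod = a :=
  Submonoid.exists_list_of_mem_closure (s := S.atoms) (S.atoms_generate.symm ▸ ha)

variable (S) in
theorem exists_lists_supp_eq (x : G) : ∃ l₁ l₂ : List G,
    (∀ a ∈ l₁, a ∈ S.atoms) ∧ (∀ a ∈ l₂, a ∈ S.atoms) ∧ l₁.prod = S.DL x ∧ l₂.prod = S.NL x ∧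
      S.supp x = S.closureOf ({a | a ∈ l₁} ∪ {a | a ∈ l₂}) := by
  obtain ⟨l₁, hl₁, hD⟩ := exists_list_atoms_prod_eq (S.DL_mem_pos x)
  obtain ⟨l₂, hl₂, hN⟩ := exists_list_atoms_prod_eq (S.NL_mem_pos x)
  have h : ∃ p : List G × List G, (∀ a ∈ p.1, a ∈ S.atoms) ∧ (∀ a ∈ p.2, a ∈ S.atoms) ∧
      p.1.prod = S.DL x ∧ p.2.prod = S.NL x := ⟨(l₁, l₂), hl₁, hl₂, hD, hN⟩
  obtain ⟨hl₁', hl₂', hD', hN'⟩ := h.choose_spec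
  exact ⟨_, _, hl₁', hl₂', hD', hN', by rw [supp, dif_pos h]⟩

theorem isStandardParabolic_GX_supp (x : G) : S.IsStandardParabolic (S.GX (S.supp x)) := by
  obtain ⟨l₁, l₂, -, -, -, -, hsupp⟩ := S.exists_lists_supp_eq x
  exact isStandardParabolic_GX (hsupp ▸ closureOf_subset_atoms _)

theorem mem_GX_supp (x : G) : x ∈ S.GX (S.supp x) := by
  obtain ⟨l₁, l₂, hl₁, hl₂, hD, hN, hsupp⟩ := S.exists_lists_supp_eq x
  have hatoms : {a | a ∈ l₁} ∪ {a | a ∈ l₂} ⊆ S.atoms := Set.union_subset hl₁ hl₂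
  have hsub := subset_GX hatoms
  rw [hsupp, GX_closureOf hatoms, ← S.DL_inv_mul_NL x, ← hD, ← hN]
  exact mul_mem (inv_mem (list_prod_mem fun a ha => hsub (Or.inl ha)))
    (list_prod_mem fun a ha => hsub (Or.inr ha))

end Support

namespace IsLCM

theorem mem_closureOf_iff (hS : S.IsLCM) (hX : X ⊆ S.atoms) (ha : a ∈ S.atoms) :
    a ∈ S.closureOf X ↔ a ∈ S.GX X := by
  refine ⟨fun h => Subgroup.subset_closure h, fun h => ⟨?_, ha⟩⟩
  rw [hS.div_eq X hX]
  exact ⟨⟨ha.1, S.atoms_divide_delta a ha.1 ha.2.1 ha.2.2⟩, h, ha.1⟩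

theorem GX_le_iff (hS : S.IsLCM) (hX : X ⊆ S.atoms) (hP : S.IsStandardParabolic P) :
    S.GX X ≤ P ↔ X ⊆ P := by
  refine ⟨fun h => (subset_GX hX).trans h, fun h => ?_⟩
  obtain ⟨Y, hY, -, rfl⟩ := hP
  exact Subgroup.closure_mono (closureOf_subset_closureOf hX hY
    fun a ha => (hS.mem_closureOf_iff hY (hX ha)).2 (h ha))

theorem mul_mem_iff (hS : S.IsLCM) (hP : S.IsStandardParabolic P) (ha : a ∈ S.pos)
    (hb : b ∈ S.pos) : a * b ∈ P ↔ a ∈ P ∧ b ∈ P := by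
  refine ⟨fun h => ?_, fun h => mul_mem h.1 h.2⟩
  obtain ⟨X, hX, -, rfl⟩ := hP
  exact hS.factor_closed X hX (a * b) h (S.pos.mul_mem ha hb) a b ha hb rfl

theorem list_prod_mem_iff (hS : S.IsLCM) (hP : S.IsStandardParabolic P) {l : List G}
    (hl : ∀ a ∈ l, a ∈ S.pos) : l.prod ∈ P ↔ ∀ a ∈ l, a ∈ P := by
  induction l with
  | nil => simp
  | cons a l ih =>
    rw [List.forall_mem_cons] at hl ⊢
    rw [List.prod_cons, hS.mul_mem_iff hP hl.1 (list_prod_mem hl.2), ih hl.2]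

theorem DL_mem (hS : S.IsLCM) (hP : S.IsStandardParabolic P) (hx : x ∈ P) : S.DL x ∈ P := by
  obtain ⟨X, hX, -, rfl⟩ := hP
  exact (hS.fraction_closed X hX x hx).1

theorem GX_supp_le_iff (hS : S.IsLCM) (hP : S.IsStandardParabolic P) :
    S.GX (S.supp x) ≤ P ↔ x ∈ P := by
  refine ⟨fun h => h (mem_GX_supp x), fun hx => ?_⟩
  obtain ⟨l₁, l₂, hl₁, hl₂, hD, hN, hsupp⟩ := S.exists_lists_supp_eq x
  have hatoms : {a | a ∈ l₁} ∪ {a | a ∈ l₂} ⊆ S.atoms := Set.union_subset hl₁ hl₂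
  have hDP : l₁.prod ∈ P := hD ▸ hS.DL_mem hP hx
  have hNP : l₂.prod ∈ P := hN ▸ mul_mem (hS.DL_mem hP hx) hx
  rw [hsupp, GX_closureOf hatoms, hS.GX_le_iff hatoms hP]
  exact Set.union_subset ((hS.list_prod_mem_iff hP fun a ha => (hl₁ a ha).1).1 hDP)
    ((hS.list_prod_mem_iff hP fun a ha => (hl₂ a ha).1).1 hNP)

theorem GX_supp_congr (hS : S.IsLCM)
    (h : ∀ P, S.IsStandardParabolic P → (x ∈ P ↔ y ∈ P)) : S.GX (S.supp x) = S.GX (S.supp y) :=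
  le_antisymm
    ((hS.GX_supp_le_iff (isStandardParabolic_GX_supp y)).2
      ((h _ (isStandardParabolic_GX_supp y)).2 (mem_GX_supp y)))
    ((hS.GX_supp_le_iff (isStandardParabolic_GX_supp x)).2
      ((h _ (isStandardParabolic_GX_supp x)).1 (mem_GX_supp x)))

theorem swapDen_mem (hS : S.IsLCM) (hP : S.IsStandardParabolic P) (hx : x ∈ P) (n : ℕ) :
    S.swapDen n x ∈ P := by
  induction n generalizing x with
  | zero => exact one_mem P
  | succ n ih =>
    have hD := hS.DL_mem hP hx
    exact mul_mem (ih (mul_mem (mul_mem hD hx) (inv_mem hD))) hD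

theorem swap_iterate_mem (hS : S.IsLCM) (hP : S.IsStandardParabolic P) (hx : x ∈ P) (n : ℕ) :
    S.swap^[n] x ∈ P := by
  have hD := hS.swapDen_mem hP hx n
  exact S.swap_iterate_eq n x ▸ mul_mem (mul_mem hD hx) (inv_mem hD)

theorem swapDen_mul_swapNum_mem_iff (hS : S.IsLCM) (hP : S.IsStandardParabolic P) (hn : n ≠ 0) :
    S.swapDen n x * S.swapNum n x ∈ P ↔ x ∈ P := by
  rw [hS.mul_mem_iff hP (S.swapDen_mem_pos n x) (S.swapNum_mem_pos n x)]
  constructor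
  · rintro ⟨hD, hN⟩
    obtain ⟨n, rfl⟩ := Nat.exists_eq_succ_of_ne_zero hn
    rw [swapDen, hS.mul_mem_iff hP (S.swapDen_mem_pos _ _) (S.DL_mem_pos _)] at hD
    rw [S.swapNum_succ, hS.mul_mem_iff hP (S.swapNum_mem_pos _ _) (S.NL_mem_pos _)] at hN
    exact S.DL_inv_mul_NL x ▸ mul_mem (inv_mem hD.2) hN.2
  · intro hx
    have hD := hS.swapDen_mem hP hx n
    exact ⟨hD, mul_mem hD (pow_mem hx n)⟩

theorem GX_supp_swapDen_mul_swapNum (hS : S.IsLCM) (hn : n ≠ 0) (x : G) :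
    S.GX (S.supp (S.swapDen n x * S.swapNum n x)) = S.GX (S.supp x) :=
  hS.GX_supp_congr fun _ hP => hS.swapDen_mul_swapNum_mem_iff hP hn

end IsLCM

section ParabolicClosure

theorem SupportPreserving.conj_smul_GX_supp (hsp : S.SupportPreserving) (hx : x ∈ S.pos)
    (hy : y ∈ S.pos) (hα : SemiconjBy α x y) :
    MulAut.conj α • S.GX (S.supp x) = S.GX (S.supp y) := by
  have h := hsp x hx y hy α⁻¹ (by rw [inv_inv, hα.eq, mul_inv_cancel_right])
  rwa [inv_inv] at h

theorem Recurrent.conj_smul_GX_supp (hS : S.IsLCM) (hsp : S.SupportPreserving)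
    (hx : S.Recurrent x) (hy : S.Recurrent y) (hα : SemiconjBy α x y) :
    MulAut.conj α • S.GX (S.supp x) = S.GX (S.supp y) := by
  obtain ⟨n, hn, hden⟩ := hx.exists_semiconjBy_swapDen hy hα
  have hnum : SemiconjBy α (S.swapNum n x) (S.swapNum n y) := hden.mul_right (hα.pow_right n)
  have hpos : ∀ z, S.swapDen n z * S.swapNum n z ∈ S.pos := fun z =>
    S.pos.mul_mem (S.swapDen_mem_pos n z) (S.swapNum_mem_pos n z)
  rw [← hS.GX_supp_swapDen_mul_swapNum hn x, ← hS.GX_supp_swapDen_mul_swapNum hn y]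
  exact hsp.conj_smul_GX_supp (hpos x) (hpos y) (hden.mul_right hnum)

theorem IsStandardParabolic.isParabolic (hP : S.IsStandardParabolic P) : S.IsParabolic P :=
  ⟨P, 1, hP, by ext; simp⟩

theorem IsParabolic.conj_smul (hP : S.IsParabolic P) (c : G) :
    S.IsParabolic (MulAut.conj c • P) := by
  obtain ⟨Q, d, hQ, rfl⟩ := hP
  refine ⟨Q, c * d, hQ, ?_⟩
  change MulAut.conj c • MulAut.conj d • Q = MulAut.conj (c * d) • Q
  rw [map_mul, mul_smul]

theorem IsParabolicClosure.conj_smul (h : S.IsParabolicClosure x P) (c : G) :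
    S.IsParabolicClosure (c * x * c⁻¹) (MulAut.conj c • P) := by
  obtain ⟨hP, hx, hmin⟩ := h
  refine ⟨hP.conj_smul c, Subgroup.smul_mem_pointwise_smul x (MulAut.conj c) P hx,
    fun H hH hxH => ?_⟩
  rw [Subgroup.pointwise_smul_subset_iff, ← map_inv]
  refine hmin _ (hH.conj_smul c⁻¹) ?_
  rwa [map_inv, Subgroup.mem_inv_pointwise_smul_iff]

theorem IsParabolicClosure.unique (hP : S.IsParabolicClosure x P)
    (hQ : S.IsParabolicClosure x Q) : P = Q :=
  le_antisymm (hP.2.2 Q hQ.1 hQ.2.1) (hQ.2.2 P hP.1 hP.2.1)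

theorem Recurrent.isParabolicClosure_GX_supp (hS : S.IsLCM) (hsp : S.SupportPreserving)
    (hx : S.Recurrent x) : S.IsParabolicClosure x (S.GX (S.supp x)) := by
  refine ⟨(isStandardParabolic_GX_supp x).isParabolic, mem_GX_supp x, ?_⟩
  rintro _ ⟨P, e, hP, rfl⟩ ⟨y, hy, rfl⟩
  change S.Recurrent (e * y * e⁻¹) at hx
  change S.GX (S.supp (e * y * e⁻¹)) ≤ MulAut.conj e • P
  obtain ⟨n, hz⟩ := S.exists_recurrent_iterate_swap y
  have hα : SemiconjBy (S.swapDen n y * e⁻¹) (e * y * e⁻¹) (S.swap^[n] y) :=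
    (S.semiconjBy_swapDen n y).mul_left (SemiconjBy.inv_symm_left_iff.2 (SemiconjBy.conj_mk e y))
  rw [Subgroup.subset_pointwise_smul_iff, ← map_inv,
    ← Subgroup.pointwise_smul_le_pointwise_smul_iff (a := MulAut.conj (S.swapDen n y)),
    Subgroup.conj_smul_eq_self_of_mem (hS.swapDen_mem hP hy n), ← mul_smul, ← map_mul,
    hx.conj_smul_GX_supp hS hsp hz hα, hS.GX_supp_le_iff hP]
  exact hS.swap_iterate_mem hP hy n

end ParabolicClosure

end GarsideStructure

/-- in a support-preserving LCM-Garside structure every element admits a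
parabolic closure; moreover for a recurrent element it is `G_{Supp(x)}`. -/
theorem garside_parabolic_closure_exists {G : Type*} [Group G]
    (S : GarsideStructure G) (hLCM : S.IsLCM) (hsp : S.SupportPreserving) (x : G) :
    ∃ P : Subgroup G, S.IsParabolic P ∧ x ∈ P ∧
      (∀ H : Subgroup G, S.IsParabolic H → x ∈ H → P ≤ H) ∧
      (S.Recurrent x → P = S.GX (S.supp x)) := by
  obtain ⟨n, hn⟩ := S.exists_recurrent_iterate_swap x
  have hconj : (S.swapDen n x)⁻¹ * S.swap^[n] x * (S.swapDen n x)⁻¹⁻¹ = x := by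
    rw [S.swap_iterate_eq]
    group
  have hclosure := (hn.isParabolicClosure_GX_supp hLCM hsp).conj_smul (S.swapDen n x)⁻¹
  rw [hconj] at hclosure
  exact ⟨_, hclosure.1, hclosure.2.1, hclosure.2.2,
    fun hx => hclosure.unique (hx.isParabolicClosure_GX_supp hLCM hsp)⟩
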